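/- arXiv:math/0507289 — 3 statements merged into one kernel-verified Lean document; each statement's English description precedes it below -/
import Mathlib

section
/- Let (c_k) be Sylvester's sequence and n ≥ 2. Define m_i = c_{i+1} for 0 ≤ i ≤ n−1 and m_n = c_{n+1} − 2, and let m_{n+1} be any integer with c_{n+1} − 2 < m_{n+1} < n·(c_{n+1} − 1)(c_{n+1} − 2). Then the ramification indices m_0, …, m_{n+1} satisfy the numerical criterion 0 < ∑_{i=0}^{n+1} 1/m_i − 1 < (n+1)·min_{0≤i≤n+1} (1/m_i) (inequalities in ℚ). -/
/-!
The recursion `x ↦ y = x ^ 2 - x + 1` satisfies `y - 1 = x * (x - 1)`, so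
`1 / x = 1 / (x - 1) - 1 / (y - 1)` and the reciprocals of Sylvester's sequence telescope.
Replacing the last term `C` of a partial sum by `C - 2` therefore makes the sum exceed `1` by
exactly `1 / ((C - 1) * (C - 2))`. One further term `1 / M`, with `M` the largest ramification
index, makes the minimum in the criterion equal to `1 / M`, and the upper bound reduces to
`1 / ((C - 1) * (C - 2)) < n / M`.
-/

/-- Sylvester's sequence `2, 3, 7, 43, …`, indexed from `0`: the term `sylvesterSeq k` is the
paper's `c_{k+1}`. The subtraction never truncates, as `x ≤ x ^ 2` in `ℕ`. -/
def sylvesterSeq : ℕ → ℕ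
  | 0 => 2
  | k + 1 => sylvesterSeq k ^ 2 - sylvesterSeq k + 1

namespace sylvesterSeq

theorem eq_of_rec {c : ℕ → ℕ} (h1 : c 1 = 2) (hrec : ∀ k ≥ 1, c (k + 1) = c k ^ 2 - c k + 1)
    (k : ℕ) : c (k + 1) = sylvesterSeq k := by
  induction k with
  | zero => exact h1
  | succ k ih => rw [hrec (k + 1) k.succ_pos, ih, sylvesterSeq]

theorem cast_succ {R : Type*} [Ring R] (k : ℕ) :
    (sylvesterSeq (k + 1) : R) = (sylvesterSeq k : R) ^ 2 - sylvesterSeq k + 1 := by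
  rw [sylvesterSeq, Nat.cast_add_one, Nat.cast_sub (Nat.le_self_pow two_ne_zero _), Nat.cast_pow]

theorem two_le (k : ℕ) : 2 ≤ sylvesterSeq k := by
  induction k with
  | zero => exact le_rfl
  | succ k ih =>
    zify at ih ⊢
    rw [cast_succ]
    nlinarith

theorem strictMono : StrictMono sylvesterSeq := by
  refine strictMono_nat_of_lt_succ fun k => ?_
  have h := two_le k
  zify at h ⊢
  rw [cast_succ]
  nlinarith

theorem three_le {k : ℕ} (hk : 0 < k) : 3 ≤ sylvesterSeq k :=
  strictMono hk

end sylvesterSeq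

section Reciprocals

open Finset

variable {K : Type*} [Field K]

theorem one_div_eq_one_div_sub_one_sub {x y : K} (hx0 : x ≠ 0) (hx1 : x ≠ 1)
    (hy : y = x ^ 2 - x + 1) : 1 / x = 1 / (x - 1) - 1 / (y - 1) := by
  have hx : x - 1 ≠ 0 := sub_ne_zero.mpr hx1
  have hfactor : y - 1 = x * (x - 1) := by rw [hy]; ring
  rw [hfactor]
  field_simp

theorem sylvesterSeq.sum_one_div [CharZero K] (k : ℕ) :
    ∑ i ∈ range k, 1 / (sylvesterSeq i : K) = 1 - 1 / ((sylvesterSeq k : K) - 1) := by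
  have telescope (i : ℕ) : 1 / (sylvesterSeq i : K) =
      1 / ((sylvesterSeq i : K) - 1) - 1 / ((sylvesterSeq (i + 1) : K) - 1) := by
    have h := two_le i
    exact one_div_eq_one_div_sub_one_sub (Nat.cast_ne_zero.mpr (by omega))
      (Nat.cast_ne_one.mpr (by omega)) (cast_succ i)
  have hzero : (sylvesterSeq 0 : K) - 1 = 1 := by norm_num [sylvesterSeq]
  rw [sum_congr rfl fun i _ => telescope i,
    sum_range_sub' (fun i => 1 / ((sylvesterSeq i : K) - 1)), hzero, div_one]

theorem sylvesterSeq.sum_one_div_add_one_div_sub_two [CharZero K] {k : ℕ} (hk : 0 < k) :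
    ∑ i ∈ range k, 1 / (sylvesterSeq i : K) + 1 / ((sylvesterSeq k - 2 : ℕ) : K) =
      1 + 1 / (((sylvesterSeq k - 1) * (sylvesterSeq k - 2) : ℕ) : K) := by
  obtain ⟨d, hd⟩ := Nat.exists_eq_add_of_le (three_le hk)
  have h1 : sylvesterSeq k - 1 = d + 2 := by omega
  have h2 : sylvesterSeq k - 2 = d + 1 := by omega
  have hd1 : (d : K) + 1 ≠ 0 := by exact_mod_cast d.succ_ne_zero
  have hd2 : (d : K) + 2 ≠ 0 := by exact_mod_cast (d + 1).succ_ne_zero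
  have hcast : (sylvesterSeq k : K) - 1 = d + 2 := by rw [hd]; push_cast; ring
  rw [sum_one_div, hcast, h1, h2]
  push_cast
  field_simp
  ring

variable [LinearOrder K] [IsStrictOrderedRing K]

theorem sum_one_div_sub_one_pos_and_lt_mul_inf' {N : ℕ} {m : ℕ → K} {q t : K} (hq : 0 < q)
    (hsum : ∑ i ∈ range N, 1 / m i = 1 + 1 / q)
    (hpos : ∀ i ∈ range (N + 1), 0 < m i) (hmax : ∀ i ∈ range (N + 1), m i ≤ m N)
    (hlt : m N < t * q) :
    0 < ∑ i ∈ range (N + 1), 1 / m i - 1 ∧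
      ∑ i ∈ range (N + 1), 1 / m i - 1 <
        (t + 1) * (range (N + 1)).inf' nonempty_range_add_one fun i => 1 / m i := by
  have hN : 0 < m N := hpos N (self_mem_range_succ N)
  have ht : 0 < t := pos_of_mul_pos_left (hN.trans hlt) hq.le
  have hexcess : ∑ i ∈ range (N + 1), 1 / m i - 1 = 1 / q + 1 / m N := by
    rw [sum_range_succ, hsum]
    ring
  have hmin : 1 / m N ≤ (range (N + 1)).inf' nonempty_range_add_one fun i => 1 / m i :=
    le_inf' _ _ fun i hi => one_div_le_one_div_of_le (hpos i hi) (hmax i hi)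
  have hq_lt : 1 / q < t * (1 / m N) := by
    rwa [mul_one_div, div_lt_div_iff₀ hq hN, one_mul]
  rw [hexcess]
  refine ⟨by positivity, ?_⟩
  calc 1 / q + 1 / m N < t * (1 / m N) + 1 / m N := by gcongr
    _ = (t + 1) * (1 / m N) := by ring
    _ ≤ _ := by gcongr

end Reciprocals

/-- For Sylvester's sequence `c`, `n ≥ 2`, ramification indices `m i = c (i+1)` for
`i < n`, `m n = c (n+1) - 2`, and any `m (n+1)` with
`c (n+1) - 2 < m (n+1) < n * (c (n+1) - 1) * (c (n+1) - 2)`, the numerical criterion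
`0 < ∑_{i=0}^{n+1} 1/(m i) - 1 < (n+1) * min_i (1/(m i))` holds in `ℚ`. -/
theorem sylvester_new_criterion
    (c : ℕ → ℕ) (h1 : c 1 = 2)
    (hrec : ∀ k ≥ 1, c (k + 1) = c k ^ 2 - c k + 1)
    (n : ℕ) (hn : 2 ≤ n)
    (m : ℕ → ℕ)
    (hm1 : ∀ i < n, m i = c (i + 1))
    (hm2 : m n = c (n + 1) - 2)
    (hlo : c (n + 1) - 2 < m (n + 1))
    (hhi : m (n + 1) < n * ((c (n + 1) - 1) * (c (n + 1) - 2))) :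
    0 < (∑ i ∈ Finset.range (n + 2), (1 : ℚ) / (m i : ℚ)) - 1 ∧
    (∑ i ∈ Finset.range (n + 2), (1 : ℚ) / (m i : ℚ)) - 1
      < ((n : ℚ) + 1) *
        (Finset.range (n + 2)).inf' (Finset.nonempty_range_iff.mpr (by omega))
          (fun i => (1 : ℚ) / (m i : ℚ)) := by
  have hc : ∀ k, c (k + 1) = sylvesterSeq k := sylvesterSeq.eq_of_rec h1 hrec
  simp only [hc] at hm1 hm2 hlo hhi
  have h3 : 3 ≤ sylvesterSeq n := sylvesterSeq.three_le (by omega)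
  have hbounds : ∀ i ∈ Finset.range (n + 2), 0 < m i ∧ m i ≤ m (n + 1) := by
    intro i hi
    obtain h | rfl | rfl : i < n ∨ i = n ∨ i = n + 1 := by
      have := Finset.mem_range.mp hi
      omega
    · have h2 := sylvesterSeq.two_le i
      have hlt := sylvesterSeq.strictMono h
      rw [hm1 i h]
      omega
    · omega
    · omega
  have hsum : ∑ i ∈ Finset.range (n + 1), (1 : ℚ) / (m i : ℚ) =
      1 + 1 / (((sylvesterSeq n - 1) * (sylvesterSeq n - 2) : ℕ) : ℚ) := by
    rw [← sylvesterSeq.sum_one_div_add_one_div_sub_two (by omega), Finset.sum_range_succ, hm2]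
    exact congrArg (· + _) (Finset.sum_congr rfl fun i hi => by rw [hm1 i (Finset.mem_range.mp hi)])
  have hq : 0 < (sylvesterSeq n - 1) * (sylvesterSeq n - 2) := Nat.mul_pos (by omega) (by omega)
  exact sum_one_div_sub_one_pos_and_lt_mul_inf' (Nat.cast_pos.mpr hq) hsum
    (fun i hi => Nat.cast_pos.mpr (hbounds i hi).1) (fun i hi => Nat.cast_le.mpr (hbounds i hi).2)
    (by exact_mod_cast hhi)
end

section
/- Let n ≥ 2 be an integer and λ ≥ 0 a real number. The function (u, v) ↦ |u^n + v^n|^{−2λ} is Lebesgue integrable on the open unit polydisc {(u,v) ∈ ℂ² : |u| < 1, |v| < 1} if and only if λ < 2/n. -/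
open MeasureTheory

/-!
On the cone `|u| ≤ R|v|`, `|v| < ρ` substitute `u = v w`. Homogeneity splits the integral of
`|u ^ n + v ^ n| ^ r` into the product of `∫ |v| ^ (n r + 2)` over the disc `|v| < ρ` and
`∫ |w ^ n + 1| ^ r` over the disc `|w| ≤ R`. The first factor is finite iff `-4 < n r`; since the
roots of `w ^ n + 1` are simple and lie on the unit circle, for `1 < R` the second one is finite
iff `-2 < r`. The polydisc contains such a cone, and is covered by one together with its mirror
image under `(u, v) ↦ (v, u)`.
-/

open Asymptotics Filter Metric Module Polynomial Set Topology
open scoped ENNReal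

section PowerSingularity

variable {E : Type*} [NormedAddCommGroup E] [NormedSpace ℝ E] [FiniteDimensional ℝ E]
  [Nontrivial E] [MeasurableSpace E] [BorelSpace E] {μ : Measure E} [μ.IsAddHaarMeasure]

theorem integrableOn_ball_norm_rpow_iff {r ρ : ℝ} (hρ : 0 < ρ) :
    IntegrableOn (fun x : E ↦ ‖x‖ ^ r) (ball 0 ρ) μ ↔ -(finrank ℝ E : ℝ) < r := by
  have radial : ∀ y ∈ Ioo 0 ρ,
      y ^ (finrank ℝ E - 1) • y ^ r = y ^ ((finrank ℝ E : ℝ) - 1 + r) := by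
    intro y hy
    rw [smul_eq_mul, ← Real.rpow_natCast, ← Real.rpow_add hy.1, Nat.cast_pred finrank_pos]
  rw [integrableOn_fun_norm_addHaar μ (f := fun y : ℝ ↦ y ^ r),
    integrableOn_congr_fun radial measurableSet_Ioo, intervalIntegral.integrableOn_Ioo_rpow_iff hρ]
  constructor <;> intro h <;> linarith

theorem integrableAtFilter_norm_rpow_iff {r : ℝ} :
    IntegrableAtFilter (fun x : E ↦ ‖x‖ ^ r) (𝓝 0) μ ↔ -(finrank ℝ E : ℝ) < r := by
  refine ⟨fun ⟨s, hs, hint⟩ ↦ ?_, fun hr ↦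
    ⟨ball 0 1, ball_mem_nhds 0 one_pos, (integrableOn_ball_norm_rpow_iff one_pos).2 hr⟩⟩
  obtain ⟨ρ, hρ, hball⟩ := Metric.mem_nhds_iff.1 hs
  exact (integrableOn_ball_norm_rpow_iff hρ).1 (hint.mono_set hball)

theorem integrableAtFilter_norm_sub_rpow_iff {a : E} {r : ℝ} :
    IntegrableAtFilter (fun x ↦ ‖x - a‖ ^ r) (𝓝 a) μ ↔ -(finrank ℝ E : ℝ) < r := by
  have translate : map (· - a) (𝓝 a) = 𝓝 0 := by simp
  have hcomp := (measurableEmbedding_subRight a).integrableAtFilter_map_iff (l := 𝓝 a) (μ := μ)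
    (f := fun x ↦ ‖x‖ ^ r)
  rw [translate, (measurePreserving_sub_right μ a).map_eq] at hcomp
  exact hcomp.symm.trans integrableAtFilter_norm_rpow_iff

theorem integrableAtFilter_norm_rpow_iff_of_isTheta {F : Type*} [NormedAddCommGroup F]
    {f : E → F} {a : E} {r : ℝ} (hf : StronglyMeasurableAtFilter f (𝓝 a) μ)
    (hfa : f =Θ[𝓝 a] (· - a)) :
    IntegrableAtFilter (fun x ↦ ‖f x‖ ^ r) (𝓝 a) μ ↔ -(finrank ℝ E : ℝ) < r := by
  have hpow : (fun x ↦ ‖f x‖ ^ r) =Θ[𝓝 a] fun x ↦ ‖x - a‖ ^ r :=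
    hfa.norm_left.norm_right.rpow (.of_forall fun _ ↦ norm_nonneg _)
      (.of_forall fun _ ↦ norm_nonneg _)
  have hmeas : StronglyMeasurableAtFilter (fun x ↦ ‖f x‖ ^ r) (𝓝 a) μ := by
    obtain ⟨s, hs, hfs⟩ := hf
    exact ⟨s, hs, (hfs.norm.aemeasurable.pow_const r).aestronglyMeasurable⟩
  have hmeas_sub : Measurable fun x : E ↦ ‖x - a‖ ^ r := by fun_prop
  rw [← integrableAtFilter_norm_sub_rpow_iff (μ := μ) (a := a)]
  exact ⟨hpow.isBigO_symm.integrableAtFilter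
      hmeas_sub.stronglyMeasurable.stronglyMeasurableAtFilter,
    hpow.isBigO.integrableAtFilter hmeas⟩

end PowerSingularity

section SeparablePolynomial

theorem isTheta_eval_sub_of_isRoot {𝕜 : Type*} [NontriviallyNormedField 𝕜] {p : 𝕜[X]}
    (hp : p.Separable) {z : 𝕜} (hz : p.IsRoot z) : (p.eval ·) =Θ[𝓝 z] (· - z) := by
  have hderiv : p.derivative.eval z ≠ 0 := hp.aeval_derivative_ne_zero (x := z) hz.eq_zero
  have htheta := (p.hasDerivAt z).isTheta_sub hderiv
  simpa only [prod_pure, IsTheta, isBigO_map, Function.comp_def, hz.eq_zero, sub_zero] using htheta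

theorem ae_eval_ne_zero {R : Type*} [CommRing R] [IsDomain R] [MeasurableSpace R] {μ : Measure R}
    [NullSingletonClass μ] {p : R[X]} (hp : p ≠ 0) : ∀ᵐ w ∂μ, p.eval w ≠ 0 :=
  (finite_setOfPred_isRoot hp).countable.ae_notMem μ

variable {p : ℂ[X]} {r : ℝ}

theorem integrableAtFilter_norm_eval_rpow_iff_of_isRoot (hp : p.Separable) {z : ℂ}
    (hz : p.IsRoot z) : IntegrableAtFilter (fun w ↦ ‖p.eval w‖ ^ r) (𝓝 z) ↔ -2 < r := by
  simpa using integrableAtFilter_norm_rpow_iff_of_isTheta (μ := volume) (r := r)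
    p.continuous.stronglyMeasurable.stronglyMeasurableAtFilter (isTheta_eval_sub_of_isRoot hp hz)

theorem locallyIntegrable_norm_eval_rpow (hp : p.Separable) (hr : -2 < r) :
    LocallyIntegrable fun w ↦ ‖p.eval w‖ ^ r := by
  intro z
  by_cases hz : p.IsRoot z
  · exact (integrableAtFilter_norm_eval_rpow_iff_of_isRoot hp hz).2 hr
  · have hcont : ContinuousAt (fun w ↦ ‖p.eval w‖ ^ r) z :=
      p.continuous.continuousAt.norm.rpow_const (.inl (norm_ne_zero_iff.2 hz))
    have hmeas : Measurable fun w ↦ ‖p.eval w‖ ^ r := by fun_prop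
    exact (volume.finiteAt_nhds z).integrableAtFilter
      hmeas.stronglyMeasurable.stronglyMeasurableAtFilter hcont.norm.isBoundedUnder_le

theorem integrableOn_closedBall_norm_eval_rpow_iff (hp : p.Separable) {z c : ℂ} {R : ℝ}
    (hz : p.IsRoot z) (hzR : z ∈ ball c R) :
    IntegrableOn (fun w ↦ ‖p.eval w‖ ^ r) (closedBall c R) ↔ -2 < r :=
  ⟨fun h ↦ (integrableAtFilter_norm_eval_rpow_iff_of_isRoot hp hz).1
      ⟨_, closedBall_mem_nhds_of_mem hzR, h⟩,
    fun hr ↦ (locallyIntegrable_norm_eval_rpow hp hr).integrableOn_isCompact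
      (isCompact_closedBall c R)⟩

end SeparablePolynomial

theorem setLIntegral_enorm_ne_zero {α F : Type*} [MeasurableSpace α] {μ : Measure α}
    [NormedAddCommGroup F] {f : α → F} {s : Set α} (hf : AEStronglyMeasurable f μ)
    (hf0 : ∀ᵐ x ∂μ, f x ≠ 0) (hs : μ s ≠ 0) : ∫⁻ x in s, ‖f x‖ₑ ∂μ ≠ 0 := by
  intro hzero
  rw [lintegral_eq_zero_iff' hf.enorm.restrict] at hzero
  have hfalse : ∀ᵐ _ ∂μ.restrict s, False := by
    filter_upwards [hzero, ae_restrict_of_ae hf0] with x hx hx0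
    exact hx0 (enorm_eq_zero.1 hx)
  exact hs (by simpa using hfalse)

theorem integrableOn_swap_preimage_iff {α β F : Type*} [MeasurableSpace α] [MeasurableSpace β]
    [NormedAddCommGroup F] {μ : Measure α} {ν : Measure β} [SFinite μ] [SFinite ν] {f : β × α → F}
    {s : Set (β × α)} :
    IntegrableOn (fun p ↦ f p.swap) (Prod.swap ⁻¹' s) (μ.prod ν) ↔ IntegrableOn f s (ν.prod μ) :=
  Measure.measurePreserving_swap.integrableOn_comp_preimage
    MeasurableEquiv.prodComm.measurableEmbedding

theorem lintegral_eq_enorm_sq_mul_lintegral_comp_mul_left {v : ℂ} (hv : v ≠ 0) {g : ℂ → ℝ≥0∞}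
    (hg : Measurable g) : ∫⁻ u, g u = ‖v‖ₑ ^ 2 * ∫⁻ w, g (v * w) := by
  have hdet : LinearMap.det (LinearMap.mul ℝ ℂ v) = ‖v‖ ^ 2 := by
    rw [← Complex.normSq_eq_norm_sq, ← Algebra.norm_complex_apply]
    exact (Algebra.norm_apply ℝ v).symm
  have hdet_ne : LinearMap.det (LinearMap.mul ℝ ℂ v) ≠ 0 := by simpa [hdet]
  have hmap : volume.map (v * ·) = (‖v‖ₑ ^ 2)⁻¹ • (volume : Measure ℂ) := by
    have hmap_det := Measure.map_linearMap_addHaar_eq_smul_addHaar volume hdet_ne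
    rwa [hdet, abs_of_nonneg (by positivity), ENNReal.ofReal_inv_of_pos (by positivity),
      ENNReal.ofReal_pow (norm_nonneg v), ofReal_norm] at hmap_det
  rw [← lintegral_map hg (measurable_const_mul v), hmap, lintegral_smul_measure, smul_eq_mul,
    ENNReal.mul_inv_cancel_left (by simpa) (by simp)]

/-- The part of `ℂ²` lying over the disc `|v| < ρ` and cut out by the lines `u = v w` through the
origin with slope `|w| ≤ R`. In the coordinates `(w, v)` it is a product of discs. -/
def discCone (R ρ : ℝ) : Set (ℂ × ℂ) :=
  {p | ‖p.1‖ ≤ R * ‖p.2‖ ∧ ‖p.2‖ < ρ}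

section DiscCone

variable {R ρ : ℝ}

theorem measurableSet_discCone : MeasurableSet (discCone R ρ) := by
  unfold discCone
  measurability

theorem mul_mem_discCone_iff {v w : ℂ} (hv : v ≠ 0) :
    (v * w, v) ∈ discCone R ρ ↔ v ∈ ball 0 ρ ∧ w ∈ closedBall 0 R := by
  have hslope : ‖v‖ * ‖w‖ ≤ ‖v‖ * R ↔ ‖w‖ ≤ R := mul_le_mul_iff_right₀ (norm_pos_iff.2 hv)
  simp [discCone, mul_comm R, hslope, and_comm]

theorem discCone_subset_polydisc (hR : 1 ≤ R) :
    discCone R R⁻¹ ⊆ {p : ℂ × ℂ | ‖p.1‖ < 1 ∧ ‖p.2‖ < 1} := by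
  rintro ⟨u, v⟩ ⟨hu, hv⟩
  have hRv : R * ‖v‖ < 1 := (lt_inv_mul_iff₀ (by positivity)).1 (by simpa using hv)
  exact ⟨hu.trans_lt hRv, hv.trans_le (inv_le_one_of_one_le₀ hR)⟩

theorem polydisc_subset_discCone_union_swap_preimage (hR : 1 ≤ R) :
    {p : ℂ × ℂ | ‖p.1‖ < 1 ∧ ‖p.2‖ < 1} ⊆ discCone R 1 ∪ Prod.swap ⁻¹' discCone R 1 := by
  rintro ⟨u, v⟩ ⟨hu, hv⟩
  rcases le_total ‖u‖ ‖v‖ with huv | hvu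
  · exact .inl ⟨huv.trans (le_mul_of_one_le_left (norm_nonneg v) hR), hv⟩
  · exact .inr ⟨hvu.trans (le_mul_of_one_le_left (norm_nonneg u) hR), hu⟩

theorem setLIntegral_discCone {f : ℂ × ℂ → ℝ≥0∞} (hf : Measurable f) :
    ∫⁻ p in discCone R ρ, f p =
      ∫⁻ v in ball 0 ρ, ‖v‖ₑ ^ 2 * ∫⁻ w in closedBall 0 R, f (v * w, v) := by
  have hind : Measurable ((discCone R ρ).indicator f) := hf.indicator measurableSet_discCone
  rw [← lintegral_indicator measurableSet_discCone, Measure.volume_eq_prod,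
    lintegral_prod_symm' _ hind, ← lintegral_indicator measurableSet_ball]
  refine lintegral_congr_ae ((Measure.ae_ne volume (0 : ℂ)).mono fun v hv ↦ ?_)
  dsimp only
  rw [lintegral_eq_enorm_sq_mul_lintegral_comp_mul_left hv (by fun_prop)]
  by_cases hvρ : v ∈ ball 0 ρ
  · have slice (w : ℂ) : (discCone R ρ).indicator f (v * w, v) =
        (closedBall 0 R).indicator (fun w ↦ f (v * w, v)) w :=
      indicator_eq_indicator (by simp only [mul_mem_discCone_iff hv, hvρ, true_and]) rfl
    simp only [slice, indicator_of_mem hvρ, lintegral_indicator measurableSet_closedBall]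
  · have slice (w : ℂ) : (discCone R ρ).indicator f (v * w, v) = 0 :=
      indicator_of_notMem (fun h ↦ hvρ ((mul_mem_discCone_iff hv).1 h).1) f
    simp only [slice, indicator_of_notMem hvρ, lintegral_zero, mul_zero]

theorem setLIntegral_discCone_enorm_norm_rpow {F : ℂ × ℂ → ℂ} {n : ℕ} {r : ℝ} (hF : Measurable F)
    (hom : ∀ c p, F (c • p) = c ^ n * F p) :
    ∫⁻ p in discCone R ρ, ‖‖F p‖ ^ r‖ₑ =
      (∫⁻ v in ball (0 : ℂ) ρ, ‖‖v‖ ^ (n * r + 2)‖ₑ) *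
        ∫⁻ w in closedBall 0 R, ‖‖F (w, 1)‖ ^ r‖ₑ := by
  rw [setLIntegral_discCone (by fun_prop), ← lintegral_mul_const _ (by fun_prop)]
  refine lintegral_congr_ae (ae_restrict_of_ae ((Measure.ae_ne volume (0 : ℂ)).mono fun v hv ↦ ?_))
  have slice (w : ℂ) : ‖‖F (v * w, v)‖ ^ r‖ₑ = ‖‖v‖ ^ (n * r)‖ₑ * ‖‖F (w, 1)‖ ^ r‖ₑ := by
    rw [show (v * w, v) = v • (w, (1 : ℂ)) by simp, hom, norm_mul, norm_pow,
      Real.mul_rpow (by positivity) (by positivity), enorm_mul,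
      Real.rpow_natCast_mul (norm_nonneg v)]
  have jacobian : ‖‖v‖ ^ (n * r + 2)‖ₑ = ‖v‖ₑ ^ 2 * ‖‖v‖ ^ (n * r)‖ₑ := by
    rw [Real.rpow_add (norm_pos_iff.2 hv), Real.rpow_two, enorm_mul, enorm_pow, enorm_norm,
      mul_comm]
  dsimp only
  simp only [slice, jacobian, mul_assoc]
  rw [lintegral_const_mul _ (by fun_prop)]

theorem integrableOn_discCone_norm_rpow_iff {F : ℂ × ℂ → ℂ} {n : ℕ} {r : ℝ} (hF : Measurable F)
    (hom : ∀ c p, F (c • p) = c ^ n * F p) (hF0 : ∀ᵐ w, F (w, 1) ≠ 0) (hR : 0 < R) (hρ : 0 < ρ) :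
    IntegrableOn (fun p ↦ ‖F p‖ ^ r) (discCone R ρ) ↔
      -4 < n * r ∧ IntegrableOn (fun w ↦ ‖F (w, 1)‖ ^ r) (closedBall 0 R) := by
  have hmeas : Measurable fun p ↦ ‖F p‖ ^ r := by fun_prop
  have hmeas_slope : Measurable fun w ↦ ‖F (w, 1)‖ ^ r := by fun_prop
  have hmeas_radial : Measurable fun v : ℂ ↦ ‖v‖ ^ (n * r + 2) := by fun_prop
  have radial_iff : IntegrableOn (fun v : ℂ ↦ ‖v‖ ^ (n * r + 2)) (ball 0 ρ) ↔ -4 < n * r := by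
    rw [integrableOn_ball_norm_rpow_iff hρ, Complex.finrank_real_complex, Nat.cast_ofNat]
    constructor <;> intro h <;> linarith
  have radial_ne_zero : ∫⁻ v in ball (0 : ℂ) ρ, ‖‖v‖ ^ (n * r + 2)‖ₑ ≠ 0 := by
    refine setLIntegral_enorm_ne_zero hmeas_radial.aestronglyMeasurable ?_
      (measure_ball_pos _ _ hρ).ne'
    filter_upwards [Measure.ae_ne volume (0 : ℂ)] with v hv
    positivity
  have slope_ne_zero : ∫⁻ w in closedBall 0 R, ‖‖F (w, 1)‖ ^ r‖ₑ ≠ 0 := by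
    refine setLIntegral_enorm_ne_zero hmeas_slope.aestronglyMeasurable ?_
      (measure_closedBall_pos _ _ hR).ne'
    filter_upwards [hF0] with w hw
    positivity
  rw [← radial_iff]
  simp only [IntegrableOn, Integrable, hmeas.aestronglyMeasurable,
    hmeas_slope.aestronglyMeasurable, hmeas_radial.aestronglyMeasurable, true_and,
    hasFiniteIntegral_iff_enorm, setLIntegral_discCone_enorm_norm_rpow hF hom,
    ENNReal.mul_lt_top_iff, radial_ne_zero, slope_ne_zero, or_false]

end DiscCone

theorem integrableOn_discCone_pow_add_pow_iff {n : ℕ} (hn : n ≠ 0) {r R ρ : ℝ} (hR : 1 < R)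
    (hρ : 0 < ρ) :
    IntegrableOn (fun p : ℂ × ℂ ↦ ‖p.1 ^ n + p.2 ^ n‖ ^ r) (discCone R ρ) ↔
      -4 < n * r ∧ -2 < r := by
  let P : ℂ[X] := X ^ n - C (-1)
  have hP : P.Separable := separable_X_pow_sub_C _ (by exact_mod_cast hn) (by simp)
  have hdehom (w : ℂ) : w ^ n + 1 ^ n = P.eval w := by simp [P]
  obtain ⟨ζ, hζ⟩ := IsAlgClosed.exists_pow_nat_eq (-1 : ℂ) (Nat.pos_of_ne_zero hn)
  have hζ_norm : ‖ζ‖ = 1 := by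
    rw [← pow_eq_one_iff_of_nonneg (norm_nonneg ζ) hn, ← norm_pow, hζ, norm_neg, norm_one]
  have hζ_root : P.IsRoot ζ := by simp [P, hζ]
  rw [integrableOn_discCone_norm_rpow_iff (F := fun p ↦ p.1 ^ n + p.2 ^ n) (n := n) (by fun_prop)
    (fun c p ↦ by simp [mul_pow, mul_add]) (by simpa only [hdehom] using ae_eval_ne_zero hP.ne_zero)
    (one_pos.trans hR) hρ]
  simp only [hdehom]
  rw [integrableOn_closedBall_norm_eval_rpow_iff hP hζ_root (by simpa [hζ_norm])]

theorem integrable_un_add_vn_iff_general {n : ℕ} (hn : n ≠ 0) (lam : ℝ) :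
    IntegrableOn
      (fun p : ℂ × ℂ => ‖p.1 ^ n + p.2 ^ n‖ ^ (-(2 * lam)))
      {p : ℂ × ℂ | ‖p.1‖ < 1 ∧ ‖p.2‖ < 1} volume ↔
    lam < min 1 (2 / (n : ℝ)) := by
  have hcone {ρ : ℝ} (hρ : 0 < ρ) :
      IntegrableOn (fun p : ℂ × ℂ ↦ ‖p.1 ^ n + p.2 ^ n‖ ^ (-(2 * lam))) (discCone 2 ρ) ↔
        lam < min 1 (2 / (n : ℝ)) := by
    rw [integrableOn_discCone_pow_add_pow_iff hn one_lt_two hρ, lt_min_iff,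
      lt_div_iff₀ (by positivity), and_comm]
    constructor <;> rintro ⟨_, _⟩ <;> constructor <;> linarith
  refine ⟨fun h ↦ (hcone (by norm_num)).1 (h.mono_set (discCone_subset_polydisc one_le_two)),
    fun h ↦ ?_⟩
  have hint := (hcone one_pos).2 h
  have hint_swap := integrableOn_swap_preimage_iff.2 hint
  simp only [Prod.fst_swap, Prod.snd_swap, add_comm (Prod.snd _ ^ n)] at hint_swap
  exact (hint.union hint_swap).mono_set
    (polydisc_subset_discCone_union_swap_preimage one_le_two)

/-- For `n ≥ 2` and `λ ≥ 0`, the function `(u,v) ↦ |u^n + v^n| ^ (-2λ)` is Lebesgue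
integrable on the open unit polydisc in `ℂ²` if and only if `λ < 2/n`. -/
theorem integrable_un_add_vn_iff
    (n : ℕ) (hn : 2 ≤ n) (lam : ℝ) (hlam : 0 ≤ lam) :
    IntegrableOn
      (fun p : ℂ × ℂ => ‖p.1 ^ n + p.2 ^ n‖ ^ (-(2 * lam)))
      {p : ℂ × ℂ | ‖p.1‖ < 1 ∧ ‖p.2‖ < 1} volume ↔
    lam < 2 / (n : ℝ) := by
  have hmin : 2 / (n : ℝ) ≤ 1 := div_le_one_of_le₀ (by exact_mod_cast hn) n.cast_nonneg
  rw [integrable_un_add_vn_iff_general (by omega), min_eq_right hmin]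
end

section
/- Let n ≥ 1, let r_1, …, r_n and ρ_1, …, ρ_n be positive reals, and let m_1, m_2 be positive integers with m_2 ∣ m_1. Set P_1 = {z ∈ ℂⁿ : |z_1| < r_1, …, |z_n| < r_n}, P_2 = {z : |z_1| < ρ_1, …, |z_n| < ρ_n}, Q_1 = {z : |z_1| < r_1^{m_1}, |z_i| < r_i for i ≥ 2}, Q_2 = {z : |z_1| < ρ_1^{m_2}, |z_i| < ρ_i for i ≥ 2}, and define π_1 : P_1 → Q_1, π_1(z) = (z_1^{m_1}, z_2, …, z_n) and π_2 : P_2 → Q_2, π_2(z) = (z_1^{m_2}, z_2, …, z_n). Let Q_1* = {z ∈ Q_1 : z_1 ≠ 0} and Q_2* = {z ∈ Q_2 : z_1 ≠ 0}. If f : Q_1 → Q_2 is holomorphic (complex differentiable on the open set Q_1) with f(Q_1*) ⊆ Q_2*, then the set of holomorphic maps f̃ : P_1 → P_2 satisfying π_2 ∘ f̃ = f ∘ π_1 on P_1 has exactly m_2 elements. -/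
/-!
The exponential map in the first variable unwinds the punctured polydisc `z₁ ≠ 0` to a simply
connected set, on which the first coordinate of `f ∘ π₁` has an `m₂`-th root. Translation by
`2πi / m₁` in the unwound variable corresponds to a deck transformation of `π₁`, so it multiplies
this root by an `m₂`-th root of unity; as `m₂ ∣ m₁`, the full period `2πi` acts trivially and the
root descends. It is bounded near `z₁ = 0`, hence extends holomorphically across that hypersurface.
The lifts are exactly the `m₂` multiples of one root by roots of unity, the remaining coordinates
being forced.
-/

open Set Filter Topology Metric MeasureTheory

section Topology

variable {X Y Z : Type*} [TopologicalSpace X] [TopologicalSpace Y] [TopologicalSpace Z]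

theorem isSimplyConnected_prod {s : Set X} {t : Set Y} (hs : IsSimplyConnected s)
    (ht : IsSimplyConnected t) : IsSimplyConnected (s ×ˢ t) := by
  have := hs.simplyConnectedSpace
  have := ht.simplyConnectedSpace
  refine (Homeomorph.Set.prod s t).toHomotopyEquiv.simplyConnectedSpace_iff.2 <|
    simply_connected_iff_paths_homotopic.2 ⟨inferInstance, fun a b => ⟨fun p q => ?_⟩⟩
  rw [← Path.Homotopic.prod_projLeft_projRight p, ← Path.Homotopic.prod_projLeft_projRight q]
  congr 1 <;> exact Subsingleton.elim _ _

theorem exists_continuousOn_image_comp_eqOn [Nonempty Z] {p : X → Y} (hp : IsOpenMap p)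
    (hpc : Continuous p) {T : Set X} (hT : IsOpen T) {ψ : X → Z} (hψ : ContinuousOn ψ T)
    (hfib : ∀ x ∈ T, ∀ x' ∈ T, p x = p x' → ψ x = ψ x') :
    ∃ G : Y → Z, ContinuousOn G (p '' T) ∧ EqOn (G ∘ p) ψ T := by
  have hfactor : (fun x : T => ψ x).FactorsThrough (fun x : T => p x) :=
    fun x x' h => hfib x x.2 x' x'.2 h
  let G : Y → Z :=
    Function.extend (fun x : T => p x) (fun x : T => ψ x) fun _ => Classical.ofNonempty
  have hG : EqOn (G ∘ p) ψ T := fun x hx =>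
    hfactor.extend_apply (fun _ => Classical.ofNonempty) (⟨x, hx⟩ : T)
  refine ⟨G, ?_, hG⟩
  rintro _ ⟨x, hx, rfl⟩
  have hlim : Tendsto (G ∘ p) (𝓝 x) (𝓝 (G (p x))) := by
    rw [show G (p x) = ψ x from hG hx]
    exact (hψ.continuousAt (hT.mem_nhds hx)).congr'
      (hG.symm.eventuallyEq_of_mem (hT.mem_nhds hx))
  rw [← tendsto_map'_iff, hp.map_nhds_eq hpc.continuousAt] at hlim
  exact ContinuousAt.continuousWithinAt hlim

theorem isSimplyConnected_of_convex {E : Type*} [NormedAddCommGroup E] [NormedSpace ℝ E]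
    {s : Set E} (hs : Convex ℝ s) (hne : s.Nonempty) : IsSimplyConnected s := by
  have := hs.contractibleSpace hne
  exact SimplyConnectedSpace.ofContractible _

end Topology

section ContinuousRoots

variable {X : Type*} [TopologicalSpace X] {S : Set X} {m : ℕ}

theorem exists_eqOn_const_mul_of_pow_eq (hS : IsPreconnected S) (hm : m ≠ 0) {u v : X → ℂ}
    (hu : ContinuousOn u S) (hv : ContinuousOn v S) (hv0 : ∀ x ∈ S, v x ≠ 0)
    (huv : ∀ x ∈ S, u x ^ m = v x ^ m) :
    ∃ c : ℂ, c ^ m = 1 ∧ EqOn u (fun x => c * v x) S := by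
  have hfin : {c : ℂ | c ^ m = 1}.Finite :=
    (Polynomial.nthRootsFinset m (1 : ℂ)).finite_toSet.subset fun c hc => by
      simpa [Polynomial.mem_nthRootsFinset hm.bot_lt] using hc
  have hmaps : MapsTo (fun x => u x / v x) S {c : ℂ | c ^ m = 1} := fun x hx => by
    simp [div_pow, huv x hx, hv0 x hx]
  obtain ⟨c, hc, hcuv⟩ :=
    hS.eqOn_const_of_mapsTo hfin.isDiscrete (hu.div hv hv0) hmaps ⟨1, by simp⟩
  exact ⟨c, hc, fun x hx => (div_eq_iff (hv0 x hx)).1 (hcuv hx)⟩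

theorem comp_iterate_eqOn_of_pow_comp_eq (hS : IsPreconnected S) (hm : m ≠ 0)
    {ψ : X → ℂ} {σ : X → X} (hψ : ContinuousOn ψ S) (hψ0 : ∀ x ∈ S, ψ x ≠ 0)
    (hσ : ContinuousOn σ S) (hσS : MapsTo σ S S) (hpow : ∀ x ∈ S, ψ (σ x) ^ m = ψ x ^ m)
    {k : ℕ} (hk : m ∣ k) : EqOn (ψ ∘ σ^[k]) ψ S := by
  obtain ⟨c, hc, hψσ⟩ :=
    exists_eqOn_const_mul_of_pow_eq hS hm (hψ.comp hσ hσS) hψ hψ0 hpow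
  have hiter (j : ℕ) : EqOn (ψ ∘ σ^[j]) (fun x => c ^ j * ψ x) S := by
    induction j with
    | zero => intro x _; simp
    | succ j ih =>
      intro x hx
      calc ψ (σ^[j + 1] x) = ψ (σ (σ^[j] x)) := by rw [Function.iterate_succ_apply']
        _ = c * ψ (σ^[j] x) := hψσ (hσS.iterate j hx)
        _ = c * (c ^ j * ψ x) := congrArg (c * ·) (ih hx)
        _ = c ^ (j + 1) * ψ x := by ring
  obtain ⟨d, rfl⟩ := hk
  intro x hx
  simpa [pow_mul, hc] using hiter (m * d) hx

end ContinuousRoots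

section Exp

theorem image_exp_re_lt_log {R : ℝ} (hR : 0 < R) :
    Complex.exp '' {w | w.re < Real.log R} = ball 0 R \ {0} := by
  ext t
  simp only [mem_image, mem_ofPred_eq, Set.mem_sdiff, mem_ball_zero_iff, mem_singleton_iff]
  constructor
  · rintro ⟨w, hw, rfl⟩
    exact ⟨by rwa [Complex.norm_exp, ← Real.lt_log_iff_exp_lt hR], Complex.exp_ne_zero w⟩
  · rintro ⟨ht, ht0⟩
    refine ⟨Complex.log t, ?_, Complex.exp_log ht0⟩
    rw [Complex.log_re]
    exact Real.log_lt_log (norm_pos_iff.2 ht0) ht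

theorem isPreconnected_ball_sdiff_zero {R : ℝ} (hR : 0 < R) :
    IsPreconnected (ball (0 : ℂ) R \ {0}) := by
  rw [← image_exp_re_lt_log hR]
  exact (convex_halfSpace_re_lt _).isPreconnected.image _ Complex.continuous_exp.continuousOn

theorem isSimplyConnected_re_lt (a : ℝ) : IsSimplyConnected {w : ℂ | w.re < a} :=
  isSimplyConnected_of_convex (convex_halfSpace_re_lt a) ⟨((a - 1 : ℝ) : ℂ), by simp⟩

theorem eq_of_exp_eq_of_add_two_pi_I {Z : Type*} [Zero Z] {h : ℂ → Z} {a : ℝ}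
    (hper : ∀ w : ℂ, w.re < a → h (w + 2 * Real.pi * Complex.I) = h w) {w w' : ℂ}
    (hw : w.re < a) (hexp : Complex.exp w = Complex.exp w') : h w = h w' := by
  have hind : Function.Periodic ({w : ℂ | w.re < a}.indicator h) (2 * Real.pi * Complex.I) := by
    intro w
    by_cases hw : w.re < a <;> simp [indicator, hw, hper]
  have hw' : w'.re < a := by
    have := congrArg norm hexp
    rw [Complex.norm_exp, Complex.norm_exp, Real.exp_eq_exp] at this
    rwa [← this]
  obtain ⟨n, rfl⟩ := Complex.exp_eq_exp_iff_exists_int.1 hexp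
  have hmem {z : ℂ} (hz : z.re < a) : {w : ℂ | w.re < a}.indicator h z = h z :=
    indicator_of_mem (s := {w : ℂ | w.re < a}) hz h
  rw [← hmem hw, ← hmem hw', hind.int_mul n w']

theorem add_two_pi_I_eq_of_pow_eq_comp_exp {Y : Type*} [TopologicalSpace Y] {U : Set Y} {a : ℝ}
    (hT : IsPreconnected ({w : ℂ | w.re < a} ×ˢ U)) {m k : ℕ} (hm : m ≠ 0) (hk : k ≠ 0)
    (hmk : m ∣ k) {F ψ : ℂ × Y → ℂ} (hψ : ContinuousOn ψ ({w : ℂ | w.re < a} ×ˢ U))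
    (hψ0 : ∀ z ∈ {w : ℂ | w.re < a} ×ˢ U, ψ z ≠ 0)
    (hψF : ∀ z, ψ z ^ m = F (Complex.exp z.1, z.2))
    (hrot : ∀ z ∈ {w : ℂ | w.re < a} ×ˢ U, ∀ ζ : ℂ, ζ ^ k = 1 →
      F (ζ * Complex.exp z.1, z.2) = F (Complex.exp z.1, z.2))
    {w : ℂ} {y : Y} (hw : (w, y) ∈ {w : ℂ | w.re < a} ×ˢ U) :
    ψ (w + 2 * Real.pi * Complex.I, y) = ψ (w, y) := by
  set τ : ℂ := 2 * Real.pi * Complex.I / k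
  have hkτ : k * τ = 2 * Real.pi * Complex.I := mul_div_cancel₀ _ (Nat.cast_ne_zero.2 hk)
  have hτre : τ.re = 0 := by simp [τ, Complex.div_natCast_re]
  have hζ : Complex.exp τ ^ k = 1 := by
    rw [← Complex.exp_nat_mul, hkτ, Complex.exp_two_pi_mul_I]
  have h := comp_iterate_eqOn_of_pow_comp_eq (σ := Prod.map (· + τ) id) hT hm hψ hψ0
    (by fun_prop) (fun z hz => ⟨by simpa [hτre] using hz.1, hz.2⟩)
    (fun z hz => by simpa [hψF, Complex.exp_add, mul_comm] using hrot z hz _ hζ) hmk hw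
  simpa [Prod.map_iterate, add_right_iterate, hkτ] using h

theorem exists_continuousOn_pow_eq_of_rotation_invariant {Y : Type*} [TopologicalSpace Y]
    [LocallyPathConnectedSpace Y] {U : Set Y} (hU : IsOpen U) (hUs : IsSimplyConnected U)
    {R : ℝ} (hR : 0 < R) {m k : ℕ} (hm : m ≠ 0) (hk : k ≠ 0) (hmk : m ∣ k) {F : ℂ × Y → ℂ}
    (hF : ContinuousOn F ((ball 0 R \ {0}) ×ˢ U)) (hF0 : ∀ z ∈ (ball 0 R \ {0}) ×ˢ U, F z ≠ 0)
    (hrot : ∀ z ∈ (ball 0 R \ {0}) ×ˢ U, ∀ ζ : ℂ, ζ ^ k = 1 → F (ζ * z.1, z.2) = F z) :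
    ∃ G : ℂ × Y → ℂ, ContinuousOn G ((ball 0 R \ {0}) ×ˢ U) ∧
      ∀ z ∈ (ball 0 R \ {0}) ×ˢ U, G z ^ m = F z := by
  set T : Set (ℂ × Y) := {w : ℂ | w.re < Real.log R} ×ˢ U
  set p : ℂ × Y → ℂ × Y := Prod.map Complex.exp id
  have hp : Continuous p := Complex.continuous_exp.prodMap continuous_id
  have hpT : p '' T = (ball 0 R \ {0}) ×ˢ U := by
    rw [prodMap_image_prod, image_exp_re_lt_log hR, image_id]
  have hT : IsOpen T := (isOpen_lt Complex.continuous_re continuous_const).prod hU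
  have hTs : IsSimplyConnected T := isSimplyConnected_prod (isSimplyConnected_re_lt _) hUs
  rw [← hpT] at hF hF0 hrot ⊢
  obtain ⟨ψ, hψ, hψF⟩ := Complex.exists_continuousOn_pow_eq hTs hT
    (hF.comp hp.continuousOn (mapsTo_image p T))
    (by rintro ⟨w, hw, h0⟩; exact hF0 _ (mem_image_of_mem p hw) h0) hm
  have hψ0 : ∀ w ∈ T, ψ w ≠ 0 := fun w hw h =>
    hF0 _ (mem_image_of_mem p hw) (by simpa [h, hm] using (hψF w).symm)
  have hfib : ∀ w ∈ T, ∀ w' ∈ T, p w = p w' → ψ w = ψ w' := by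
    rintro ⟨w, y⟩ ⟨hw, hy⟩ ⟨w', y'⟩ - h
    obtain ⟨hexp, rfl⟩ := Prod.mk.inj h
    refine eq_of_exp_eq_of_add_two_pi_I (h := fun w => ψ (w, y)) (fun w hw => ?_) hw hexp
    exact add_two_pi_I_eq_of_pow_eq_comp_exp hTs.isPathConnected.isConnected.isPreconnected hm
      hk hmk hψ hψ0 hψF (fun w hw => hrot _ (mem_image_of_mem p hw)) ⟨hw, hy⟩
  obtain ⟨G, hG, hGψ⟩ := exists_continuousOn_image_comp_eqOn
    (Complex.isOpenMap_exp.prodMap IsOpenMap.id) hp hT hψ hfib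
  refine ⟨G, hG, forall_mem_image.2 fun w hw => ?_⟩
  rw [show G (p w) = ψ w from hGψ hw, hψF, Function.comp_apply]

end Exp

section Holomorphic

variable {E : Type*} [NormedAddCommGroup E] [NormedSpace ℂ E]

theorem differentiableAt_of_pow_eventuallyEq {G F : E → ℂ} {z : E} {m : ℕ}
    (hG : ContinuousAt G z) (hF : DifferentiableAt ℂ F z) (hF0 : F z ≠ 0) (hm : m ≠ 0)
    (hGF : ∀ᶠ x in 𝓝 z, G x ^ m = F x) : DifferentiableAt ℂ G z := by
  have hGz := hGF.self_of_nhds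
  have hG0 : G z ≠ 0 := fun h => hF0 (by rw [← hGz, h, zero_pow hm])
  have hbranch : DifferentiableAt ℂ (fun x => G z * (F x / F z) ^ (m : ℂ)⁻¹) z :=
    (DifferentiableAt.cpow_const (f := fun x => F x / F z) (hF.mul_const (F z)⁻¹)
      (by simp [hF0, div_self])).const_mul _
  refine hbranch.congr_of_eventuallyEq ?_
  have harg : Tendsto (fun x => (G x / G z).arg) (𝓝 z) (𝓝 0) := by
    have h := (hG.div_const (G z)).tendsto
    rw [div_self hG0] at h
    simpa [Function.comp_def] using
      (Complex.continuousAt_arg Complex.one_mem_slitPlane).tendsto.comp h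
  have hπ : 0 < Real.pi / m := by positivity
  filter_upwards [hGF, harg.eventually (Ioo_mem_nhds (neg_lt_zero.2 hπ) hπ)] with x hx hxarg
  rw [← hx, ← hGz, ← div_pow, Complex.pow_cpow_nat_inv hm hxarg.1 hxarg.2.le,
    mul_div_cancel₀ _ hG0]

theorem norm_sub_le_of_norm_le {h : E → ℂ} {x₀ x : E} {δ M : ℝ}
    (hh : DifferentiableOn ℂ h (ball x₀ δ)) (hM : ∀ y ∈ ball x₀ δ, ‖h y‖ ≤ M)
    (hx : x ∈ ball x₀ δ) : ‖h x - h x₀‖ ≤ 2 * M / δ * ‖x - x₀‖ := by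
  have hx₀ : x₀ ∈ ball x₀ δ := mem_ball_self (pos_of_mem_ball hx)
  simp only [← dist_eq_norm]
  refine Complex.dist_le_div_mul_dist_of_mapsTo_ball hh (fun y hy => ?_) hx
  calc dist (h y) (h x₀) ≤ ‖h y‖ + ‖h x₀‖ := dist_le_norm_add_norm _ _
    _ ≤ 2 * M := by linarith [hM y hy, hM x₀ hx₀]

theorem differentiableAt_intervalIntegral_of_norm_le {K : E → ℝ → ℂ} {x₀ : E} {a b δ M : ℝ}
    (hδ : 0 < δ) (hK : ∀ θ, DifferentiableOn ℂ (K · θ) (ball x₀ δ))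
    (hM : ∀ θ, ∀ x ∈ ball x₀ δ, ‖K x θ‖ ≤ M) (hcont : ∀ x ∈ ball x₀ δ, Continuous (K x))
    (hmeas : StronglyMeasurable fun θ => fderiv ℂ (K · θ) x₀) :
    DifferentiableAt ℂ (fun x => ∫ θ in a..b, K x θ) x₀ := by
  have hx₀ : x₀ ∈ ball x₀ δ := mem_ball_self hδ
  have hderiv (θ : ℝ) : HasFDerivAt (K · θ) (fderiv ℂ (K · θ) x₀) x₀ :=
    ((hK θ).differentiableAt (ball_mem_nhds x₀ hδ)).hasFDerivAt
  have hint (s : Set ℝ) (hs : IntegrableOn (K x₀) s) (hs' : volume s ≠ ⊤) :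
      DifferentiableAt ℂ (fun x => ∫ θ in s, K x θ) x₀ := by
    have : IsFiniteMeasure (volume.restrict s) := isFiniteMeasure_restrict.2 hs'
    exact (hasFDerivAt_integral_of_dominated_loc_of_lip' (𝕜 := ℂ) (ball_mem_nhds x₀ hδ)
      (fun x hx => (hcont x hx).aestronglyMeasurable) hs hmeas.aestronglyMeasurable
      (.of_forall fun θ x hx => norm_sub_le_of_norm_le (hK θ) (hM θ) hx)
      (integrable_const (2 * M / δ)) (.of_forall hderiv)).2.differentiableAt
  have hab := (hcont x₀ hx₀).intervalIntegrable a b (μ := volume)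
  exact (hint _ hab.1 measure_Ioc_lt_top.ne).sub (hint _ hab.2 measure_Ioc_lt_top.ne)

variable [FiniteDimensional ℂ E] {U : Set E}

theorem differentiableOn_circleIntegral (hU : IsOpen U) {W : ℂ × E → ℂ} {c : ℂ} {R : ℝ}
    (hR : 0 ≤ R) (hW : ∀ z ∈ sphere c R ×ˢ U, DifferentiableAt ℂ W z) :
    DifferentiableOn ℂ (fun x => ∮ ζ in C(c, R), W (ζ, x)) U := by
  intro x₀ hx₀
  have := FiniteDimensional.proper ℂ E
  obtain ⟨δ, hδ, hball⟩ := nhds_basis_closedBall.mem_iff.1 (hU.mem_nhds hx₀)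
  obtain ⟨M, hM⟩ := ((isCompact_sphere c R).prod
    (isCompact_closedBall x₀ δ)).exists_bound_of_continuousOn (f := W)
    fun z hz => (hW z ⟨hz.1, hball hz.2⟩).continuousAt.continuousWithinAt
  have hWat (θ : ℝ) {x : E} (hx : x ∈ ball x₀ δ) : DifferentiableAt ℂ W (circleMap c R θ, x) :=
    hW _ ⟨circleMap_mem_sphere c hR θ, hball (ball_subset_closedBall hx)⟩
  have hslice (θ : ℝ) {x : E} (hx : x ∈ ball x₀ δ) :
      HasFDerivAt (fun y => W (circleMap c R θ, y))
        (fderiv ℂ W (circleMap c R θ, x) ∘L ContinuousLinearMap.inr ℂ ℂ E) x :=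
    (hWat θ hx).hasFDerivAt.comp x (hasFDerivAt_prodMk_right _ x)
  have hcircle : Continuous (deriv (circleMap c R)) := by
    simp only [funext (deriv_circleMap c R)]
    fun_prop
  refine (differentiableAt_intervalIntegral_of_norm_le (M := R * M) hδ (fun θ x hx => ?_)
    (fun θ x hx => ?_) (fun x hx => ?_) ?_).differentiableWithinAt
  · exact ((hslice θ hx).fun_const_smul
      (deriv (circleMap c R) θ)).differentiableAt.differentiableWithinAt
  · rw [norm_smul, deriv_circleMap, norm_mul, Complex.norm_I, mul_one, norm_circleMap_zero,
      abs_of_nonneg hR]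
    gcongr
    exact hM _ ⟨circleMap_mem_sphere c hR θ, ball_subset_closedBall hx⟩
  · exact hcircle.smul <| continuous_iff_continuousAt.2 fun θ =>
      ContinuousAt.comp (f := fun θ => (circleMap c R θ, x)) (hWat θ hx).continuousAt (by fun_prop)
  · borelize E
    simp only [fun θ => ((hslice θ (mem_ball_self hδ)).fun_const_smul
      (deriv (circleMap c R) θ)).fderiv]
    have hfderiv : Measurable fun θ => fderiv ℂ W (circleMap c R θ, x₀) :=
      (measurable_fderiv ℂ W).comp (by fun_prop : Continuous _).measurable
    exact hcircle.stronglyMeasurable.smul <|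
      (ContinuousLinearMap.precomp ℂ (ContinuousLinearMap.inr ℂ ℂ E)).continuous
        |>.comp_stronglyMeasurable hfderiv.stronglyMeasurable

theorem differentiableOn_ball_prod_of_sphere (hU : IsOpen U) {R : ℝ} {g : ℂ × E → ℂ} {c : ℂ}
    (hslice : ∀ x ∈ U, DiffContOnCl ℂ (fun t => g (t, x)) (ball c R))
    (hsphere : ∀ z ∈ sphere c R ×ˢ U, DifferentiableAt ℂ g z) :
    DifferentiableOn ℂ g (ball c R ×ˢ U) := by
  intro z₀ hz₀
  have hR : 0 < R := pos_of_mem_ball hz₀.1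
  have hker : ∀ q ∈ sphere c R ×ˢ (ball c R ×ˢ U),
      DifferentiableAt ℂ (fun q : ℂ × ℂ × E => (q.1 - q.2.1)⁻¹ • g (q.1, q.2.2)) q := by
    rintro ⟨ζ, t, x⟩ ⟨hζ, ht, hx⟩
    have hne : ζ - t ≠ 0 := sub_ne_zero.2 <|
      ne_of_mem_of_not_mem hζ fun h => (mem_ball.1 ht).ne (mem_sphere.1 h)
    have hg : DifferentiableAt ℂ (fun q : ℂ × ℂ × E => g (q.1, q.2.2)) (ζ, t, x) :=
      DifferentiableAt.comp (f := fun q : ℂ × ℂ × E => (q.1, q.2.2)) (ζ, t, x)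
        (hsphere (ζ, x) ⟨hζ, hx⟩) (by fun_prop)
    exact DifferentiableAt.fun_smul (DifferentiableAt.fun_inv (by fun_prop) hne) hg
  refine ((differentiableOn_circleIntegral (isOpen_ball.prod hU) hR.le hker).const_smul
    (2 * Real.pi * Complex.I : ℂ)⁻¹).congr (fun z hz => ?_) z₀ hz₀
  exact ((hslice z.2 hz.2).two_pi_i_inv_smul_circleIntegral_sub_inv_smul hz.1).symm

theorem exists_differentiableOn_eqOn_of_isBoundedUnder (hU : IsOpen U) {R : ℝ} {G : ℂ × E → ℂ}
    (hG : DifferentiableOn ℂ G ((ball 0 R \ {0}) ×ˢ U))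
    (hbdd : ∀ x ∈ U, IsBoundedUnder (· ≤ ·) (𝓝[≠] 0) fun t => ‖G (t, x)‖) :
    ∃ g : ℂ × E → ℂ, DifferentiableOn ℂ g (ball 0 R ×ˢ U) ∧
      EqOn g G ((ball 0 R \ {0}) ×ˢ U) := by
  set g : ℂ × E → ℂ := fun z =>
    Function.update (fun t => G (t, z.2)) 0 (limUnder (𝓝[≠] 0) fun t => G (t, z.2)) z.1
  have hgG : EqOn g G ({0}ᶜ ×ˢ univ) := fun z hz => Function.update_of_ne hz.1 _ _
  have hopen : IsOpen ((ball (0 : ℂ) R \ {0}) ×ˢ U) :=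
    (isOpen_ball.sdiff isClosed_singleton).prod hU
  have hslice : ∀ x ∈ U, DifferentiableOn ℂ (fun t => g (t, x)) (ball 0 R) := by
    intro x hx
    rcases le_or_gt R 0 with hR | hR
    · simp [ball_eq_empty.2 hR, differentiableOn_empty]
    refine Complex.differentiableOn_update_limUnder_of_isLittleO (ball_mem_nhds _ hR) ?_ ?_
    · exact hG.comp (by fun_prop) fun t ht => ⟨ht, hx⟩
    · exact (IsBoundedUnder.isLittleO_sub_self_inv (hbdd x hx)).sub
        (IsBoundedUnder.isLittleO_sub_self_inv isBoundedUnder_const)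
  refine ⟨g, fun z hz => ?_, hgG.mono ?_⟩
  · obtain ⟨R', hzR', hR'R⟩ := exists_between (mem_ball_zero_iff.1 hz.1)
    have hR' : 0 < R' := (norm_nonneg _).trans_lt hzR'
    refine (DifferentiableOn.differentiableAt ?_ <|
      (isOpen_ball.prod hU).mem_nhds ⟨mem_ball_zero_iff.2 hzR', hz.2⟩).differentiableWithinAt
    refine differentiableOn_ball_prod_of_sphere hU (fun x hx => ?_) fun w hw => ?_
    · exact DifferentiableOn.diffContOnCl_ball (hslice x hx) (closedBall_subset_ball hR'R)
    · have hw' : w ∈ (ball 0 R \ {0}) ×ˢ U :=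
        ⟨⟨sphere_subset_ball hR'R hw.1, ne_of_mem_sphere hw.1 hR'.ne'⟩, hw.2⟩
      exact (hG.differentiableAt (hopen.mem_nhds hw')).congr_of_eventuallyEq <|
        eventuallyEq_of_mem (hopen.mem_nhds hw') fun v hv => hgG ⟨hv.1.2, mem_univ _⟩
  · exact prod_mono (fun t ht => ht.2) (subset_univ U)

end Holomorphic

section Lifts

variable {X Y Z : Type*} [NormedAddCommGroup X] [NormedSpace ℂ X] [NormedAddCommGroup Y]
  [NormedSpace ℂ Y]

/-- The holomorphic lifts over `P` of `φ` through `p`, that is the solutions `g` of `p ∘ g = φ`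
on `P`, counted as functions on `P`. With `p = (· ^ m)` these are the holomorphic `m`-th roots
of `φ`. -/
def holomorphicLifts (P : Set X) (p : Y → Z) (φ : X → Z) : Set (P → Y) :=
  (fun g => P.domRestrict g) '' {g : X → Y | DifferentiableOn ℂ g P ∧ ∀ z ∈ P, p (g z) = φ z}

theorem holomorphicLifts_eq_of_mapsTo {P : Set X} {P' : Set Y} {Q : Set Z} {p : Y → Z}
    {φ : X → Z} (hφ : MapsTo φ P Q) (hp : p ⁻¹' Q ⊆ P') :
    (fun g => P.domRestrict g) '' {g : X → Y | DifferentiableOn ℂ g P ∧ MapsTo g P P' ∧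
      ∀ z ∈ P, p (g z) = φ z} = holomorphicLifts P p φ := by
  refine congrArg _ (ext fun g => and_congr_right fun _ => and_iff_right_of_imp fun hg z hz => ?_)
  exact hp (by rw [mem_preimage, hg z hz]; exact hφ hz)

theorem ncard_holomorphicLifts_continuousLinearEquiv {X' Y' Z' : Type*} [NormedAddCommGroup X']
    [NormedSpace ℂ X'] [NormedAddCommGroup Y'] [NormedSpace ℂ Y'] (e : X ≃L[ℂ] X')
    (e' : Y ≃L[ℂ] Y') {j : Z → Z'} (hj : j.Injective) {P : Set X'} {p : Y → Z} {p' : Y' → Z'}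
    {φ : X → Z} {φ' : X' → Z'} (hp : ∀ y, p' (e' y) = j (p y))
    (hφ : ∀ x, e x ∈ P → φ' (e x) = j (φ x)) :
    (holomorphicLifts P p' φ').ncard = (holomorphicLifts (e ⁻¹' P) p φ).ncard := by
  let Ψ : (P → Y') → (e ⁻¹' P → Y) := fun u x => e'.symm (u ⟨e x, x.2⟩)
  have hΨ : Ψ.Injective := fun u v huv => funext fun x => e'.symm.injective <| by
    simpa [Ψ] using congrFun huv ⟨e.symm x, by simp⟩
  rw [← ncard_image_of_injective _ hΨ]
  congr 1
  apply Subset.antisymm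
  · rintro _ ⟨_, ⟨g, ⟨hg, hgφ⟩, rfl⟩, rfl⟩
    refine ⟨e'.symm ∘ g ∘ e, ⟨?_, fun x hx => hj ?_⟩, rfl⟩
    · exact e'.symm.differentiable.comp_differentiableOn
        (hg.comp e.differentiable.differentiableOn fun x hx => hx)
    · rw [← hp, ← hφ x hx, ← hgφ _ hx]
      simp
  · rintro _ ⟨g, ⟨hg, hgφ⟩, rfl⟩
    refine ⟨_, ⟨e' ∘ g ∘ e.symm, ⟨?_, fun x hx => ?_⟩, rfl⟩, funext fun x => ?_⟩
    · exact e'.differentiable.comp_differentiableOn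
        (hg.comp e.symm.differentiable.differentiableOn fun x hx => by simpa using hx)
    · have hx' : e.symm x ∈ e ⁻¹' P := by simpa using hx
      simp only [Function.comp_apply]
      rw [hp, hgφ _ hx', ← hφ _ hx', e.apply_symm_apply]
    · simp [Ψ, domRestrict]

theorem ncard_holomorphicLifts_prodMap_id {W : Type*} [NormedAddCommGroup W] [NormedSpace ℂ W]
    {P : Set X} {p : Y → Z} {φ : X → Z × W} (hφ : DifferentiableOn ℂ (fun z => (φ z).2) P) :
    (holomorphicLifts P (Prod.map p id) φ).ncard =
      (holomorphicLifts P p fun z => (φ z).1).ncard := by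
  have hinj : InjOn (fun (u : P → Y × W) z => (u z).1)
      (holomorphicLifts P (Prod.map p id) φ) := by
    rintro _ ⟨g, ⟨-, hg⟩, rfl⟩ _ ⟨h, ⟨-, hh⟩, rfl⟩ hgh
    refine funext fun z => Prod.ext (congrFun hgh z) ?_
    exact (congrArg Prod.snd (hg z z.2)).trans (congrArg Prod.snd (hh z z.2)).symm
  rw [← hinj.ncard_image]
  congr 1
  apply Subset.antisymm
  · rintro _ ⟨_, ⟨g, ⟨hg, hgφ⟩, rfl⟩, rfl⟩
    exact ⟨fun z => (g z).1, ⟨hg.fst, fun z hz => congrArg Prod.fst (hgφ z hz)⟩, rfl⟩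
  · rintro _ ⟨g, ⟨hg, hgφ⟩, rfl⟩
    exact ⟨_, ⟨fun z => (g z, (φ z).2), ⟨hg.prodMk hφ, fun z hz => Prod.ext (hgφ z hz) rfl⟩,
      rfl⟩, rfl⟩

theorem ncard_holomorphicLifts_pow {P S : Set X} (hS : IsPreconnected S) (hS₀ : S.Nonempty)
    (hSP : S ⊆ P) (hPS : P ⊆ closure S) {m : ℕ} (hm : m ≠ 0) {F g : X → ℂ}
    (hF : ∀ z ∈ S, F z ≠ 0) (hg : DifferentiableOn ℂ g P) (hgF : ∀ z ∈ P, g z ^ m = F z) :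
    (holomorphicLifts P (· ^ m) F).ncard = m := by
  have hg0 : ∀ z ∈ S, g z ≠ 0 := fun z hz h =>
    hF z hz (by rw [← hgF z (hSP hz), h, zero_pow hm])
  have hroots : holomorphicLifts P (· ^ m) F =
      (fun c : ℂ => P.domRestrict (c • g)) '' Polynomial.nthRootsFinset m (1 : ℂ) := by
    apply Subset.antisymm
    · rintro _ ⟨h, ⟨hh, hhF⟩, rfl⟩
      obtain ⟨c, hc, hhg⟩ := exists_eqOn_const_mul_of_pow_eq hS hm (hh.continuousOn.mono hSP)
        (hg.continuousOn.mono hSP) hg0 fun z hz => (hhF z (hSP hz)).trans (hgF z (hSP hz)).symm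
      refine ⟨c, (Polynomial.mem_nthRootsFinset hm.bot_lt _).2 hc,
        (domRestrict_eq_domRestrict_iff.2 ?_).symm⟩
      exact hhg.of_subset_closure hh.continuousOn (hg.continuousOn.const_smul c) hSP hPS
    · rintro _ ⟨c, hc, rfl⟩
      have hc' : c ^ m = 1 := (Polynomial.mem_nthRootsFinset hm.bot_lt _).1 hc
      exact ⟨_, ⟨hg.const_smul c, fun z hz => by simp [mul_pow, hc', hgF z hz]⟩, rfl⟩
  obtain ⟨s, hs⟩ := hS₀
  have hinj : Function.Injective fun c : ℂ => P.domRestrict (c • g) := fun c c' hcc' =>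
    mul_right_cancel₀ (hg0 s hs) (congrFun hcc' ⟨s, hSP hs⟩)
  rw [hroots, ncard_image_of_injective _ hinj, ncard_coe_finset,
    (Complex.isPrimitiveRoot_exp m hm).card_nthRootsFinset]

end Lifts

section Roots

theorem le_max_one_pow (a : ℝ) {m : ℕ} (hm : m ≠ 0) : a ≤ max 1 (a ^ m) :=
  (le_total a 1).elim le_max_of_le_left fun h => le_max_of_le_right (le_self_pow₀ h hm)

theorem ball_prod_subset_closure_ball_sdiff_zero_prod {X : Type*} [TopologicalSpace X] (R : ℝ)
    (U : Set X) :
    ball (0 : ℂ) R ×ˢ U ⊆ closure ((ball 0 R \ {0}) ×ˢ U) := by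
  rw [closure_prod_eq, sdiff_eq]
  exact prod_mono ((dense_compl_singleton 0).open_subset_closure_inter isOpen_ball) subset_closure

variable {E : Type*} [NormedAddCommGroup E] [NormedSpace ℂ E] [FiniteDimensional ℂ E]
  {U : Set E} {R : ℝ} {m k : ℕ}

theorem exists_differentiableOn_pow_eq (hU : IsOpen U) (hUs : IsSimplyConnected U) (hR : 0 < R)
    (hm : m ≠ 0) (hk : k ≠ 0) (hmk : m ∣ k) {F : ℂ × E → ℂ}
    (hF : DifferentiableOn ℂ F (ball 0 R ×ˢ U))
    (hF0 : ∀ z ∈ (ball 0 R \ {0}) ×ˢ U, F z ≠ 0)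
    (hrot : ∀ z ∈ (ball 0 R \ {0}) ×ˢ U, ∀ ζ : ℂ, ζ ^ k = 1 → F (ζ * z.1, z.2) = F z) :
    ∃ g : ℂ × E → ℂ, DifferentiableOn ℂ g (ball 0 R ×ˢ U) ∧
      ∀ z ∈ ball 0 R ×ˢ U, g z ^ m = F z := by
  have hD : (ball (0 : ℂ) R \ {0}) ×ˢ U ⊆ ball 0 R ×ˢ U := prod_mono_left sdiff_subset
  have hDopen : IsOpen ((ball (0 : ℂ) R \ {0}) ×ˢ U) :=
    (isOpen_ball.sdiff isClosed_singleton).prod hU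
  obtain ⟨G, hG, hGF⟩ := exists_continuousOn_pow_eq_of_rotation_invariant hU hUs hR hm hk hmk
    (hF.continuousOn.mono hD) hF0 hrot
  have hGdiff : DifferentiableOn ℂ G ((ball 0 R \ {0}) ×ˢ U) := fun z hz =>
    (differentiableAt_of_pow_eventuallyEq (hG.continuousAt (hDopen.mem_nhds hz))
      (hF.differentiableAt ((isOpen_ball.prod hU).mem_nhds (hD hz))) (hF0 z hz) hm <|
      eventually_of_mem (hDopen.mem_nhds hz) hGF).differentiableWithinAt
  have hbdd : ∀ x ∈ U, IsBoundedUnder (· ≤ ·) (𝓝[≠] 0) fun t => ‖G (t, x)‖ := by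
    intro x hx
    have hF₀ : ContinuousAt (fun t => F (t, x)) 0 :=
      ((hF.differentiableAt <| (isOpen_ball.prod hU).mem_nhds
        ⟨mem_ball_self hR, hx⟩).continuousAt).comp (f := fun t => (t, x)) (by fun_prop)
    refine ((isBoundedUnder_const (a := 1)).sup
      (hF₀.tendsto.mono_left nhdsWithin_le_nhds).norm.isBoundedUnder_le).mono_le ?_
    filter_upwards [self_mem_nhdsWithin, nhdsWithin_le_nhds (ball_mem_nhds 0 hR)] with t ht0 ht
    rw [← hGF (t, x) ⟨⟨ht, ht0⟩, hx⟩, norm_pow]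
    exact le_max_one_pow _ hm
  obtain ⟨g, hg, hgG⟩ := exists_differentiableOn_eqOn_of_isBoundedUnder hU hGdiff hbdd
  have hgF : EqOn (fun z => g z ^ m) F ((ball 0 R \ {0}) ×ˢ U) := fun z hz => by
    simp only [hgG hz, hGF z hz]
  exact ⟨g, hg, hgF.of_subset_closure (hg.continuousOn.pow m) hF.continuousOn hD
    (ball_prod_subset_closure_ball_sdiff_zero_prod R U)⟩

theorem local_lifting_count_general {E' : Type*} [NormedAddCommGroup E'] [NormedSpace ℂ E']
    (hU : IsOpen U) (hUs : IsSimplyConnected U) (hR : 0 < R) {m₁ m₂ : ℕ} (hm₁ : m₁ ≠ 0)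
    (hm₂ : m₂ ≠ 0) (hdvd : m₂ ∣ m₁) {f : ℂ × E → ℂ × E'}
    (hf : DifferentiableOn ℂ f (ball 0 (R ^ m₁) ×ˢ U))
    (hf0 : ∀ z ∈ ball 0 (R ^ m₁) ×ˢ U, z.1 ≠ 0 → (f z).1 ≠ 0) :
    (holomorphicLifts (ball 0 R ×ˢ U) (Prod.map (· ^ m₂) id)
      (f ∘ Prod.map (· ^ m₁) id)).ncard = m₂ := by
  have hπ : MapsTo (Prod.map (· ^ m₁) id) (ball (0 : ℂ) R ×ˢ U) (ball 0 (R ^ m₁) ×ˢ U) :=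
    fun z hz => ⟨by
      simpa using pow_lt_pow_left₀ (mem_ball_zero_iff.1 hz.1) (norm_nonneg _) hm₁, hz.2⟩
  have hφ : DifferentiableOn ℂ (f ∘ Prod.map (· ^ m₁) id) (ball 0 R ×ˢ U) :=
    hf.comp (by unfold Prod.map; fun_prop) hπ
  have hF0 : ∀ z ∈ (ball 0 R \ {0}) ×ˢ U, (f (z.1 ^ m₁, z.2)).1 ≠ 0 := fun z hz =>
    hf0 _ (hπ ⟨hz.1.1, hz.2⟩) (pow_ne_zero _ hz.1.2)
  obtain ⟨g, hg, hgF⟩ := exists_differentiableOn_pow_eq hU hUs hR hm₂ hm₁ hdvd hφ.fst hF0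
    fun z _ ζ hζ => by simp [Prod.map, mul_pow, hζ]
  have hpre : IsPreconnected ((ball (0 : ℂ) R \ {0}) ×ˢ U) :=
    (isPreconnected_ball_sdiff_zero hR).prod hUs.isPathConnected.isConnected.isPreconnected
  have hne : ((ball (0 : ℂ) R \ {0}) ×ˢ U).Nonempty := by
    refine Nonempty.prod ?_ hUs.isPathConnected.nonempty
    exact image_exp_re_lt_log hR ▸ (isSimplyConnected_re_lt _).isPathConnected.nonempty.image _
  rw [ncard_holomorphicLifts_prodMap_id hφ.snd]
  exact ncard_holomorphicLifts_pow hpre hne (prod_mono_left sdiff_subset)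
    (ball_prod_subset_closure_ball_sdiff_zero_prod R U) hm₂ hF0 hg hgF

end Roots

section Polydisc

variable {ι : Type*}

/-- The polydisc in `ℂ^ι` centred at the origin with polyradius `r`. -/
def polydisc (r : ι → ℝ) : Set (ι → ℂ) :=
  {z | ∀ i, ‖z i‖ < r i}

/-- The model branched cover of order `m`, raising the `i`-th coordinate to the `m`-th power. -/
def branchedCover [DecidableEq ι] (i : ι) (m : ℕ) (z : ι → ℂ) : ι → ℂ :=
  Function.update z i (z i ^ m)

theorem polydisc_eq_pi_ball (r : ι → ℝ) :
    polydisc r = Set.pi univ fun i => ball 0 (r i) := by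
  ext z
  simp [polydisc]

theorem isOpen_polydisc [Finite ι] (r : ι → ℝ) : IsOpen (polydisc r) := by
  rw [polydisc_eq_pi_ball]
  exact isOpen_set_pi finite_univ fun _ _ => isOpen_ball

theorem isSimplyConnected_polydisc [Finite ι] {r : ι → ℝ} (hr : ∀ i, 0 < r i) :
    IsSimplyConnected (polydisc r) := by
  have := Fintype.ofFinite ι
  rw [polydisc_eq_pi_ball]
  exact isSimplyConnected_of_convex (convex_pi fun _ _ => convex_ball 0 _)
    (univ_pi_nonempty_iff.2 fun i => nonempty_ball.2 (hr i))

theorem polydisc_update [DecidableEq ι] (r : ι → ℝ) (i : ι) (a : ℝ) :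
    polydisc (Function.update r i a) = {z | ‖z i‖ < a ∧ ∀ j, j ≠ i → ‖z j‖ < r j} :=
  ext fun z => Function.forall_update_iff r fun j b => ‖z j‖ < b

theorem preimage_branchedCover_polydisc [DecidableEq ι] {r : ι → ℝ} {i : ι} (hr : 0 ≤ r i)
    {m : ℕ} (hm : m ≠ 0) :
    branchedCover i m ⁻¹' polydisc (Function.update r i (r i ^ m)) = polydisc r := by
  refine ext fun z => forall_congr' fun j => ?_
  rcases eq_or_ne j i with rfl | hj
  · simp [branchedCover, pow_lt_pow_iff_left₀ (norm_nonneg _) hr hm]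
  · simp [branchedCover, hj]

theorem preimage_consEquivL_polydisc {n : ℕ} (r : Fin (n + 1) → ℝ) :
    Fin.consEquivL ℂ (fun _ => ℂ) ⁻¹' polydisc r = ball 0 (r 0) ×ˢ polydisc (Fin.tail r) := by
  ext z
  simp [polydisc, Fin.forall_fin_succ, Fin.consEquivL, Fin.tail]

theorem branchedCover_consEquivL {n : ℕ} (m : ℕ) (z : ℂ × (Fin n → ℂ)) :
    branchedCover 0 m (Fin.consEquivL ℂ (fun _ => ℂ) z) =
      Fin.consEquivL ℂ (fun _ => ℂ) (Prod.map (· ^ m) id z) :=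
  Fin.update_cons_zero _ _ _

theorem ncard_holomorphicLifts_branchedCover {n : ℕ} {r : Fin (n + 1) → ℝ} (hr : ∀ i, 0 < r i)
    {m₁ m₂ : ℕ} (hm₁ : m₁ ≠ 0) (hm₂ : m₂ ≠ 0) (hdvd : m₂ ∣ m₁)
    {f : (Fin (n + 1) → ℂ) → Fin (n + 1) → ℂ}
    (hf : DifferentiableOn ℂ f (polydisc (Function.update r 0 (r 0 ^ m₁))))
    (hf0 : ∀ z ∈ polydisc (Function.update r 0 (r 0 ^ m₁)), z 0 ≠ 0 → f z 0 ≠ 0) :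
    (holomorphicLifts (polydisc r) (branchedCover 0 m₂) (f ∘ branchedCover 0 m₁)).ncard = m₂ := by
  let e := Fin.consEquivL ℂ fun _ : Fin (n + 1) => ℂ
  have hQ : e ⁻¹' polydisc (Function.update r 0 (r 0 ^ m₁)) =
      ball 0 (r 0 ^ m₁) ×ˢ polydisc (Fin.tail r) := by
    rw [preimage_consEquivL_polydisc, Function.update_self, Fin.tail_update_zero]
  have hfe : DifferentiableOn ℂ (e.symm ∘ f ∘ e) (ball 0 (r 0 ^ m₁) ×ˢ polydisc (Fin.tail r)) :=
    e.symm.differentiable.comp_differentiableOn <|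
      hf.comp e.differentiable.differentiableOn hQ.ge
  rw [ncard_holomorphicLifts_continuousLinearEquiv e e e.injective (branchedCover_consEquivL m₂)
    (φ := (e.symm ∘ f ∘ e) ∘ Prod.map (· ^ m₁) id) fun z _ => ?_, preimage_consEquivL_polydisc]
  · exact local_lifting_count_general (isOpen_polydisc _)
      (isSimplyConnected_polydisc fun i : Fin n => hr i.succ) (hr 0) hm₁ hm₂ hdvd hfe
      fun z hz hz0 => hf0 (e z) (hQ.ge hz) hz0
  · exact (congrArg f (branchedCover_consEquivL m₁ z)).trans (e.apply_symm_apply _).symm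

end Polydisc

/-- Local lifting lemma for model branched covers of polydiscs: if `m₂ ∣ m₁` and
`f : Q₁ → Q₂` is holomorphic with `f(Q₁*) ⊆ Q₂*`, then the set of holomorphic maps
`f̃ : P₁ → P₂` with `π₂ ∘ f̃ = f ∘ π₁` has exactly `m₂` elements (maps are counted
as functions on `P₁`, i.e. via their restrictions to `P₁`). -/
theorem local_lifting_count
    (n : ℕ) (hn : 0 < n) (r ρ : Fin n → ℝ) (hr : ∀ i, 0 < r i) (hρ : ∀ i, 0 < ρ i)
    (m₁ m₂ : ℕ) (hm₁ : 0 < m₁) (hm₂ : 0 < m₂) (hdvd : m₂ ∣ m₁)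
    (P₁ P₂ Q₁ Q₂ Q₁s Q₂s : Set (Fin n → ℂ))
    (hP₁ : P₁ = {z | ∀ i, ‖z i‖ < r i})
    (hP₂ : P₂ = {z | ∀ i, ‖z i‖ < ρ i})
    (hQ₁ : Q₁ = {z | ‖z ⟨0, hn⟩‖ < r ⟨0, hn⟩ ^ m₁ ∧
      ∀ i, i ≠ ⟨0, hn⟩ → ‖z i‖ < r i})
    (hQ₂ : Q₂ = {z | ‖z ⟨0, hn⟩‖ < ρ ⟨0, hn⟩ ^ m₂ ∧
      ∀ i, i ≠ ⟨0, hn⟩ → ‖z i‖ < ρ i})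
    (hQ₁s : Q₁s = {z ∈ Q₁ | z ⟨0, hn⟩ ≠ 0})
    (hQ₂s : Q₂s = {z ∈ Q₂ | z ⟨0, hn⟩ ≠ 0})
    (π₁ π₂ : (Fin n → ℂ) → (Fin n → ℂ))
    (hπ₁ : π₁ = fun z => Function.update z ⟨0, hn⟩ (z ⟨0, hn⟩ ^ m₁))
    (hπ₂ : π₂ = fun z => Function.update z ⟨0, hn⟩ (z ⟨0, hn⟩ ^ m₂))
    (f : (Fin n → ℂ) → (Fin n → ℂ))
    (hf : DifferentiableOn ℂ f Q₁)
    (hfQ : Set.MapsTo f Q₁ Q₂)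
    (hfs : Set.MapsTo f Q₁s Q₂s) :
    Set.ncard
      ((fun g => P₁.restrict g) ''
        {g : (Fin n → ℂ) → (Fin n → ℂ) |
          DifferentiableOn ℂ g P₁ ∧ Set.MapsTo g P₁ P₂ ∧
          ∀ z ∈ P₁, π₂ (g z) = f (π₁ z)}) = m₂ := by
  obtain ⟨n, rfl⟩ := Nat.exists_eq_succ_of_ne_zero hn.ne'
  replace hQ₁ := hQ₁.trans (polydisc_update r 0 (r 0 ^ m₁)).symm
  replace hQ₂ := hQ₂.trans (polydisc_update ρ 0 (ρ 0 ^ m₂)).symm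
  subst hP₁ hP₂ hQ₁ hQ₂ hQ₁s hQ₂s hπ₁ hπ₂
  have hφ : MapsTo (f ∘ branchedCover 0 m₁) (polydisc r)
      (polydisc (Function.update ρ 0 (ρ 0 ^ m₂))) :=
    hfQ.comp (preimage_branchedCover_polydisc (hr 0).le hm₁.ne').ge
  have hP₂ := (preimage_branchedCover_polydisc (hρ 0).le hm₂.ne').le
  exact (congrArg ncard (holomorphicLifts_eq_of_mapsTo hφ hP₂)).trans <|
    ncard_holomorphicLifts_branchedCover hr hm₁.ne' hm₂.ne' hdvd hf fun z hz hz0 =>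
      (hfs ⟨hz, hz0⟩).2
end
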